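/- arXiv:2202.02870 — 3 statements merged into one kernel-verified Lean document; each statement's English description precedes it below -/
import Mathlib

section
/- For every n ≥ 1 and every family A = (A^1, …, A^n) of complex I₁×I₂ matrices, the block Toeplitz-plus-Hankel matrix of A is block-diagonalized: (C_n ⊗ I_{I₁}) · btph(A) · (C_nᵀ ⊗ I_{I₂}) = blockdiag(Â^1, …, Â^n), where Â^p = ∑_{q=1}^n (M_n)_{p,q} A^q for each p. -/
open Matrix Kronecker

noncomputable section

/-- The discrete cosine transform (DCT) matrix `C_n`. -/
def dctMatrix (n : ℕ) : Matrix (Fin n) (Fin n) ℝ :=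
  Matrix.of fun i j =>
    Real.sqrt ((2 - if (i : ℕ) = 0 then (1 : ℝ) else 0) / n) *
      Real.cos ((i : ℕ) * (2 * (j : ℕ) + 1) * Real.pi / (2 * n))

/-- Toeplitz-plus-Hankel selector (0-based indexing). -/
def thSelect {m : ℕ} {β : Type*} [AddCommMonoid β] (B : Fin m → β) (i j : Fin m) : β :=
  B ⟨(((i : ℕ) : ℤ) - ((j : ℕ) : ℤ)).natAbs, by
      have hi := i.isLt; have hj := j.isLt; omega⟩ +
  (if h1 : (i : ℕ) + (j : ℕ) + 2 ≤ m then
      B ⟨(i : ℕ) + (j : ℕ) + 1, by omega⟩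
   else if h2 : (i : ℕ) + (j : ℕ) + 2 = m + 1 then 0
   else
      B ⟨2 * m - 1 - ((i : ℕ) + (j : ℕ)), by
        have hi := i.isLt; have hj := j.isLt; omega⟩)

/-- The block Toeplitz-plus-Hankel matrix `btph(A)` of a family `A = (A^1, …, A^n)`
of complex `I₁×I₂` matrices. -/
def btph {n I₁ I₂ : ℕ} (A : Fin n → Matrix (Fin I₁) (Fin I₂) ℂ) :
    Matrix (Fin n × Fin I₁) (Fin n × Fin I₂) ℂ :=
  Matrix.of fun p q => thSelect A p.1 q.1 p.2 q.2

/-- `W_n`: the diagonal matrix whose diagonal is the first column of `C_n`. -/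
def Wmat (n : ℕ) : Matrix (Fin n) (Fin n) ℝ :=
  Matrix.diagonal fun i => dctMatrix n i ⟨0, i.pos⟩

/-- `Z_n`: the upshift matrix. -/
def Zmat (n : ℕ) : Matrix (Fin n) (Fin n) ℝ :=
  Matrix.of fun i j => if (i : ℕ) + 1 = (j : ℕ) then 1 else 0

/-- `M_n = W_n⁻¹ C_n (I_n + Z_n)`. -/
def Mmat (n : ℕ) : Matrix (Fin n) (Fin n) ℝ :=
  (Wmat n)⁻¹ * dctMatrix n * (1 + Zmat n)

/-- The indicator kernel of slice `r` in the Toeplitz-plus-Hankel matrix. -/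
def thK (n : ℕ) (r i j : Fin n) : ℝ :=
  (if (((i : ℕ) : ℤ) - ((j : ℕ) : ℤ)).natAbs = (r : ℕ) then 1 else 0) +
  (if (i : ℕ) + (j : ℕ) + 1 = (r : ℕ) then 1 else 0) +
  (if (i : ℕ) + (j : ℕ) + (r : ℕ) + 1 = 2 * n then 1 else 0)

lemma fin_sum_ite_val {n : ℕ} {P : Fin n → Prop} [DecidablePred P] (k : Fin n)
    (h : ∀ i, P i ↔ i = k) (g : Fin n → ℂ) :
    ∑ r, (if P r then g r else 0) = g k := by
  have : ∀ r, (if P r then g r else 0) = if r = k then g r else 0 := by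
    intro r; simp only [h r]
  simp [this]

lemma fin_sum_ite_none {n : ℕ} {P : Fin n → Prop} [DecidablePred P]
    (h : ∀ i, ¬ P i) (g : Fin n → ℂ) :
    ∑ r, (if P r then g r else 0) = 0 := by
  simp [h]

lemma thSelect_eq {n I₁ I₂ : ℕ} (A : Fin n → Matrix (Fin I₁) (Fin I₂) ℂ) (i j : Fin n)
    (a : Fin I₁) (b : Fin I₂) :
    thSelect A i j a b = ∑ r, (thK n r i j : ℂ) * A r a b := by
  have hi := i.isLt
  have hj := j.isLt
  unfold thSelect thK
  simp only [Complex.ofReal_add, apply_ite Complex.ofReal, Complex.ofReal_one,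
    Complex.ofReal_zero, add_mul, ite_mul, one_mul, zero_mul, Finset.sum_add_distrib]
  refine Eq.trans (Matrix.add_apply _ _ _ _) ?_
  refine Eq.trans ?_ (add_assoc _ _ _).symm
  congr 1
  · rw [fin_sum_ite_val (⟨(((i : ℕ) : ℤ) - ((j : ℕ) : ℤ)).natAbs, by omega⟩ : Fin n)]
    intro r; rw [Fin.ext_iff]; simp only; omega
  · split_ifs with h1 h2
    · rw [fin_sum_ite_val (⟨(i : ℕ) + (j : ℕ) + 1, by omega⟩ : Fin n), fin_sum_ite_none, add_zero]
      · intro r; have := r.isLt; omega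
      · intro r; rw [Fin.ext_iff]; simp only; omega
    · rw [fin_sum_ite_none, fin_sum_ite_none]
      · simp
      · intro r; have := r.isLt; omega
      · intro r; have := r.isLt; omega
    · rw [fin_sum_ite_none, fin_sum_ite_val (⟨2 * n - 1 - ((i : ℕ) + (j : ℕ)), by omega⟩ : Fin n),
        zero_add]
      · intro r; rw [Fin.ext_iff]; simp only; omega
      · intro r; have := r.isLt; omega

/-- The cosine row extended to integers. -/
def cosRow (n : ℕ) (p : ℕ) (k : ℤ) : ℝ :=
  Real.cos ((p : ℝ) * (2 * (k : ℝ) + 1) * Real.pi / (2 * n))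

lemma cosRow_neg (n p : ℕ) (k : ℤ) : cosRow n p (-1 - k) = cosRow n p k := by
  unfold cosRow
  rw [← Real.cos_neg]
  congr 1
  push_cast
  ring

lemma cosRow_refl (n p : ℕ) (hn : 1 ≤ n) (k : ℤ) :
    cosRow n p (2 * n - 1 - k) = cosRow n p k := by
  have hn0 : (n : ℝ) ≠ 0 := by positivity
  unfold cosRow
  rw [← Real.cos_nat_mul_two_pi_sub _ p]
  congr 1
  push_cast
  field_simp
  ring

lemma cosRow_add (n p : ℕ) (hn : 1 ≤ n) (j r : ℤ) :
    cosRow n p (j + r) + cosRow n p (j - r) =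
      cosRow n p j * (2 * Real.cos ((p : ℝ) * r * Real.pi / n)) := by
  have hn0 : (n : ℝ) ≠ 0 := by positivity
  unfold cosRow
  have e1 : (p : ℝ) * (2 * ((j + r : ℤ) : ℝ) + 1) * Real.pi / (2 * n) =
      (p : ℝ) * (2 * (j : ℝ) + 1) * Real.pi / (2 * n) + (p : ℝ) * r * Real.pi / n := by
    push_cast; field_simp; ring
  have e2 : (p : ℝ) * (2 * ((j - r : ℤ) : ℝ) + 1) * Real.pi / (2 * n) =
      (p : ℝ) * (2 * (j : ℝ) + 1) * Real.pi / (2 * n) - (p : ℝ) * r * Real.pi / n := by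
    push_cast; field_simp; ring
  rw [e1, e2, Real.cos_add, Real.cos_sub]
  ring

/-- Eigenvalue coefficient. -/
def lamCoef (n p r : ℕ) : ℝ := if r = 0 then 1 else 2 * Real.cos ((p : ℝ) * r * Real.pi / n)

lemma fin_sum_single_int {n : ℕ} {P : Fin n → Prop} [DecidablePred P] (k : ℤ)
    (h : ∀ i : Fin n, P i ↔ ((i : ℕ) : ℤ) = k) (g : ℤ → ℝ) :
    ∑ i : Fin n, g ((i : ℕ) : ℤ) * (if P i then (1 : ℝ) else 0) =
      if 0 ≤ k ∧ k < n then g k else 0 := by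
  split_ifs with hk
  · rw [Finset.sum_eq_single (⟨k.toNat, by omega⟩ : Fin n)]
    · have e : ((k.toNat : ℕ) : ℤ) = k := by omega
      have : P (⟨k.toNat, by omega⟩ : Fin n) := by rw [h]; exact e
      simp only [this, if_true, mul_one]
      rw [e]
    · intro i _ hi
      rw [if_neg, mul_zero]
      rw [h]
      intro hh; apply hi; rw [Fin.ext_iff]; simp only; omega
    · intro hh; exact absurd (Finset.mem_univ _) hh
  · apply Finset.sum_eq_zero
    intro i _
    rw [if_neg, mul_zero]
    rw [h]; have := i.isLt; omega

lemma cosRow_thK (n p : ℕ) (hn : 1 ≤ n) (r j : Fin n) :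
    ∑ i : Fin n, cosRow n p ((i : ℕ) : ℤ) * thK n r i j =
      cosRow n p ((j : ℕ) : ℤ) * lamCoef n p r := by
  have hr := r.isLt
  have hj := j.isLt
  unfold thK lamCoef
  simp only [mul_add, Finset.sum_add_distrib]
  rw [fin_sum_single_int (P := fun i : Fin n => (i : ℕ) + (j : ℕ) + 1 = (r : ℕ))
      (((r : ℕ) : ℤ) - 1 - ((j : ℕ) : ℤ)) (by intro i; omega),
    fin_sum_single_int (P := fun i : Fin n => (i : ℕ) + (j : ℕ) + (r : ℕ) + 1 = 2 * n)
      (2 * (n : ℤ) - 1 - (((j : ℕ) : ℤ) + ((r : ℕ) : ℤ))) (by intro i; omega)]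
  by_cases h0 : (r : ℕ) = 0
  · rw [fin_sum_single_int
        (P := fun i : Fin n => (((i : ℕ) : ℤ) - ((j : ℕ) : ℤ)).natAbs = (r : ℕ))
        (((j : ℕ) : ℤ)) (by intro i; omega)]
    rw [if_pos (by omega), if_neg (by omega), if_neg (by omega), if_pos h0]
    ring
  · rw [if_neg h0]
    have hs : ∀ i : Fin n,
        (if (((i : ℕ) : ℤ) - ((j : ℕ) : ℤ)).natAbs = (r : ℕ) then (1 : ℝ) else 0) =
        (if ((i : ℕ) : ℤ) = ((j : ℕ) : ℤ) + ((r : ℕ) : ℤ) then (1 : ℝ) else 0) +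
        (if ((i : ℕ) : ℤ) = ((j : ℕ) : ℤ) - ((r : ℕ) : ℤ) then (1 : ℝ) else 0) := by
      intro i
      split_ifs <;> first | omega | norm_num
    simp only [hs, mul_add, Finset.sum_add_distrib]
    rw [fin_sum_single_int (((j : ℕ) : ℤ) + ((r : ℕ) : ℤ)) (by intro i; rfl),
      fin_sum_single_int (((j : ℕ) : ℤ) - ((r : ℕ) : ℤ)) (by intro i; rfl)]
    have key := cosRow_add n p hn ((j : ℕ) : ℤ) ((r : ℕ) : ℤ)
    have e1 := cosRow_refl n p hn (((j : ℕ) : ℤ) + ((r : ℕ) : ℤ))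
    have e2 := cosRow_neg n p (((j : ℕ) : ℤ) - ((r : ℕ) : ℤ))
    have e3 : -1 - (((j : ℕ) : ℤ) - ((r : ℕ) : ℤ)) = ((r : ℕ) : ℤ) - 1 - ((j : ℕ) : ℤ) := by ring
    rw [e3] at e2
    rw [e1, e2]
    push_cast at key
    rw [← key]
    split_ifs <;> first | omega | ring

lemma cos_pos_aux (n p : ℕ) (hp : p < n) : cosRow n p 0 ≠ 0 := by
  have hp' : (p : ℝ) < n := by exact_mod_cast hp
  have hn0 : (0 : ℝ) < n := by have : 0 < n := by omega
                               exact_mod_cast this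
  apply ne_of_gt
  unfold cosRow
  apply Real.cos_pos_of_mem_Ioo
  have hpi := Real.pi_pos
  constructor
  · have : (0 : ℝ) ≤ (p : ℝ) * (2 * ((0 : ℤ) : ℝ) + 1) * Real.pi / (2 * n) := by
      push_cast; positivity
    linarith
  · rw [div_lt_iff₀ (by positivity)]
    push_cast
    nlinarith

lemma dct_apply (n : ℕ) (i j : Fin n) : dctMatrix n i j =
    Real.sqrt ((2 - if (i : ℕ) = 0 then (1 : ℝ) else 0) / n) * cosRow n i ((j : ℕ) : ℤ) := by
  simp [dctMatrix, cosRow]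

lemma scale_sq (n : ℕ) (i : ℕ) :
    Real.sqrt ((2 - if i = 0 then (1 : ℝ) else 0) / n) *
    Real.sqrt ((2 - if i = 0 then (1 : ℝ) else 0) / n) =
    (2 - if i = 0 then (1 : ℝ) else 0) / n := by
  apply Real.mul_self_sqrt
  split_ifs <;> positivity

lemma scale_ne (n : ℕ) (hn : 1 ≤ n) (i : ℕ) :
    Real.sqrt ((2 - if i = 0 then (1 : ℝ) else 0) / n) ≠ 0 := by
  have : (0 : ℝ) < n := by exact_mod_cast hn
  apply Real.sqrt_ne_zero'.2
  split_ifs <;> norm_num <;> positivity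

lemma Mmat_apply (n : ℕ) (hn : 1 ≤ n) (p r : Fin n) : Mmat n p r = lamCoef n p r := by
  have hW : ∀ i : Fin n, dctMatrix n i ⟨0, i.pos⟩ ≠ 0 := by
    intro i
    rw [dct_apply]
    exact mul_ne_zero (scale_ne n hn i) (by simpa using cos_pos_aux n i i.isLt)
  have hinv : (Wmat n)⁻¹ = Matrix.diagonal fun i : Fin n => (dctMatrix n i ⟨0, i.pos⟩)⁻¹ := by
    apply Matrix.inv_eq_left_inv
    unfold Wmat
    rw [Matrix.diagonal_mul_diagonal, ← Matrix.diagonal_one]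
    congr 1
    funext i
    exact inv_mul_cancel₀ (hW i)
  unfold Mmat
  rw [hinv, Matrix.mul_assoc, Matrix.diagonal_mul, Matrix.mul_add, Matrix.mul_one,
    Matrix.add_apply, Matrix.mul_apply]
  rw [inv_mul_eq_iff_eq_mul₀ (hW p)]
  simp only [dct_apply, Zmat, Matrix.of_apply, mul_assoc]
  rw [← Finset.mul_sum, ← mul_add]
  congr 1
  rw [fin_sum_single_int (((r : ℕ) : ℤ) - 1) (by intro i; omega)]
  have hr := r.isLt
  unfold lamCoef
  by_cases h0 : (r : ℕ) = 0
  · rw [if_neg (by omega), if_pos h0, h0]; simp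
  · rw [if_pos (by omega), if_neg h0]
    have key := cosRow_add n p hn 0 ((r : ℕ) : ℤ)
    have e2 := cosRow_neg n p (0 - ((r : ℕ) : ℤ))
    have e3 : -1 - (0 - ((r : ℕ) : ℤ)) = ((r : ℕ) : ℤ) - 1 := by ring
    rw [e3] at e2
    rw [e2]
    push_cast at key ⊢
    rw [← key, zero_add]

lemma sum_cos_zero (n : ℕ) (m : ℤ) (hm : m ≠ 0) (h1 : m < 2 * n) (h2 : -(2 * n) < m) :
    ∑ j : Fin n, Real.cos ((m : ℝ) * (2 * (j : ℕ) + 1) * Real.pi / (2 * n)) = 0 := by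
  rcases Nat.eq_zero_or_pos n with h | hn
  · subst h; simp
  have hn0 : (0 : ℝ) < n := by exact_mod_cast hn
  have hpi := Real.pi_pos
  have hs : Real.sin ((m : ℝ) * Real.pi / (2 * n)) ≠ 0 := by
    have h1' : (m : ℝ) < 2 * n := by exact_mod_cast h1
    have h2' : -(2 * n : ℝ) < m := by exact_mod_cast h2
    intro h
    rw [Real.sin_eq_zero_iff_of_lt_of_lt] at h
    · have : (m : ℝ) ≠ 0 := by exact_mod_cast hm
      have h3 : (m : ℝ) * Real.pi / (2 * n) ≠ 0 := by positivity
      exact h3 h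
    · rw [lt_div_iff₀ (by positivity)]; nlinarith
    · rw [div_lt_iff₀ (by positivity)]; nlinarith
  have ht : ∀ j : ℕ, 2 * Real.sin ((m : ℝ) * Real.pi / (2 * n)) *
      Real.cos ((m : ℝ) * (2 * (j : ℕ) + 1) * Real.pi / (2 * n)) =
      Real.sin ((m : ℝ) * ((j + 1 : ℕ) : ℝ) * Real.pi / n) -
        Real.sin ((m : ℝ) * (j : ℝ) * Real.pi / n) := by
    intro j
    have e1 : (m : ℝ) * ((j + 1 : ℕ) : ℝ) * Real.pi / n =
      (m : ℝ) * (2 * (j : ℕ) + 1) * Real.pi / (2 * n) + (m : ℝ) * Real.pi / (2 * n) := by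
      push_cast; field_simp; ring
    have e2 : (m : ℝ) * (j : ℝ) * Real.pi / n =
      (m : ℝ) * (2 * (j : ℕ) + 1) * Real.pi / (2 * n) - (m : ℝ) * Real.pi / (2 * n) := by
      field_simp; ring
    rw [e1, e2, Real.sin_add, Real.sin_sub]
    ring
  have : 2 * Real.sin ((m : ℝ) * Real.pi / (2 * n)) *
      ∑ j : Fin n, Real.cos ((m : ℝ) * (2 * (j : ℕ) + 1) * Real.pi / (2 * n)) = 0 := by
    rw [Finset.mul_sum]
    simp only [ht]
    rw [Fin.sum_univ_eq_sum_range (fun j : ℕ => Real.sin ((m : ℝ) * ((j + 1 : ℕ) : ℝ) * Real.pi / n) -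
        Real.sin ((m : ℝ) * (j : ℝ) * Real.pi / n)) n,
      Finset.sum_range_sub (fun j : ℕ => Real.sin ((m : ℝ) * (j : ℝ) * Real.pi / n))]
    have e : (m : ℝ) * (n : ℝ) * Real.pi / n = (m : ℝ) * Real.pi := by field_simp
    rw [e, Real.sin_int_mul_pi]
    simp
  rcases mul_eq_zero.1 this with h | h
  · exact absurd h (mul_ne_zero two_ne_zero hs)
  · exact h

lemma dct_orth (n : ℕ) (hn : 1 ≤ n) (p q : Fin n) :
    ∑ j, dctMatrix n p j * dctMatrix n q j = if p = q then 1 else 0 := by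
  have hn0 : (0 : ℝ) < n := by exact_mod_cast hn
  have hp := p.isLt
  have hq := q.isLt
  have hprod : ∀ j : Fin n, cosRow n p ((j : ℕ) : ℤ) * cosRow n q ((j : ℕ) : ℤ) =
      (Real.cos ((((p : ℕ) - (q : ℕ) : ℤ) : ℝ) * (2 * (j : ℕ) + 1) * Real.pi / (2 * n)) +
       Real.cos ((((p : ℕ) + (q : ℕ) : ℤ) : ℝ) * (2 * (j : ℕ) + 1) * Real.pi / (2 * n))) / 2 := by
    intro j
    unfold cosRow
    have e1 : (((p : ℕ) - (q : ℕ) : ℤ) : ℝ) * (2 * (j : ℕ) + 1) * Real.pi / (2 * n) =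
      ((p : ℕ) : ℝ) * (2 * (((j : ℕ) : ℤ) : ℝ) + 1) * Real.pi / (2 * n) -
      ((q : ℕ) : ℝ) * (2 * (((j : ℕ) : ℤ) : ℝ) + 1) * Real.pi / (2 * n) := by
      push_cast; ring
    have e2 : (((p : ℕ) + (q : ℕ) : ℤ) : ℝ) * (2 * (j : ℕ) + 1) * Real.pi / (2 * n) =
      ((p : ℕ) : ℝ) * (2 * (((j : ℕ) : ℤ) : ℝ) + 1) * Real.pi / (2 * n) +
      ((q : ℕ) : ℝ) * (2 * (((j : ℕ) : ℤ) : ℝ) + 1) * Real.pi / (2 * n) := by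
      push_cast; ring
    rw [e1, e2, Real.cos_add, Real.cos_sub]
    ring
  simp only [dct_apply]
  simp only [mul_mul_mul_comm _ (cosRow n p _)]
  rw [← Finset.mul_sum]
  simp only [hprod]
  rw [← Finset.sum_div, Finset.sum_add_distrib]
  by_cases hpq : p = q
  · subst hpq
    rw [scale_sq, if_pos rfl]
    by_cases h0 : (p : ℕ) = 0
    · simp [h0]
      field_simp
      norm_num
    · rw [sum_cos_zero n ((p : ℕ) + (p : ℕ) : ℤ) (by omega) (by omega) (by omega), if_neg h0]
      simp
      omega
  · have hne : (p : ℕ) ≠ q := fun h => hpq (Fin.ext h)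
    rw [sum_cos_zero n ((p : ℕ) + (q : ℕ) : ℤ) (by omega) (by omega) (by omega),
      sum_cos_zero n ((p : ℕ) - (q : ℕ) : ℤ) (by omega) (by omega) (by omega), if_neg hpq]
    simp

lemma dct_thK (n : ℕ) (hn : 1 ≤ n) (p r j : Fin n) :
    ∑ i, dctMatrix n p i * thK n r i j = dctMatrix n p j * Mmat n p r := by
  rw [Mmat_apply n hn]
  simp only [dct_apply, mul_assoc]
  rw [← Finset.mul_sum, cosRow_thK n p hn]

/-- For every `n ≥ 1` and family `A = (A^1, …, A^n)` of complex `I₁×I₂` matrices: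
`(C_n ⊗ I_{I₁}) btph(A) (C_nᵀ ⊗ I_{I₂}) = blockdiag(Â^1, …, Â^n)`,
where `Â^p = ∑_q (M_n)_{p,q} A^q`. -/
theorem dct_block_diagonalizes_btph (n I₁ I₂ : ℕ) (hn : 1 ≤ n)
    (A : Fin n → Matrix (Fin I₁) (Fin I₂) ℂ) :
    ((dctMatrix n).map (Complex.ofReal) ⊗ₖ (1 : Matrix (Fin I₁) (Fin I₁) ℂ)) * btph A *
        (((dctMatrix n).map (Complex.ofReal))ᵀ ⊗ₖ (1 : Matrix (Fin I₂) (Fin I₂) ℂ))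
      = Matrix.of fun p q =>
          if p.1 = q.1 then (∑ r, (((Mmat n) p.1 r : ℝ) : ℂ) • A r) p.2 q.2 else 0 := by
  ext ⟨p, a⟩ ⟨q, b⟩
  have h1 : ∀ j c, (((dctMatrix n).map (Complex.ofReal) ⊗ₖ (1 : Matrix (Fin I₁) (Fin I₁) ℂ))
      * btph A) (p, a) (j, c) = (dctMatrix n p j : ℂ) * ∑ r, (Mmat n p r : ℂ) * A r a c := by
    intro j c
    rw [Matrix.mul_apply, Fintype.sum_prod_type]
    simp only [Matrix.kroneckerMap_apply, Matrix.map_apply, Matrix.one_apply, btph,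
      Matrix.of_apply, mul_ite, mul_one, mul_zero, ite_mul, zero_mul, Finset.sum_ite_eq,
      Finset.mem_univ, if_true, thSelect_eq]
    simp only [Finset.mul_sum]
    rw [Finset.sum_comm]
    refine Finset.sum_congr rfl fun r _ => ?_
    have := congrArg (Complex.ofReal) (dct_thK n hn p r j)
    push_cast at this
    rw [← mul_assoc, ← this, Finset.sum_mul]
    refine Finset.sum_congr rfl fun i _ => ?_
    ring
  rw [Matrix.mul_apply, Fintype.sum_prod_type]
  simp only [h1]
  simp only [Matrix.kroneckerMap_apply, Matrix.map_apply, Matrix.transpose_apply, Matrix.one_apply,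
      Matrix.of_apply, mul_ite, mul_one, mul_zero, Finset.sum_ite_eq',
      Finset.mem_univ, if_true]
  have ho := congrArg (Complex.ofReal) (dct_orth n hn p q)
  push_cast at ho
  simp only [mul_right_comm]
  rw [← Finset.sum_mul, ho]
  split_ifs <;> simp [Matrix.sum_apply]
end
end

section
/- For all n, m ≥ 1 and every array x = (x_{k,l}) ∈ ℂ^{n×m}, the fourth-order block Toeplitz-plus-Hankel matrix of x is diagonalized: (C_m ⊗ C_n) · btph(x) · (C_mᵀ ⊗ C_nᵀ) = diag(x̂), where x̂ ∈ ℂ^{nm} has entries x̂_{(l−1)n+k} = ∑_{k'=1}^n ∑_{l'=1}^m (M_n)_{k,k'} (M_m)_{l,l'} x_{k',l'} (the mode-wise transform of x by M_n and M_m). -/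
open Matrix Kronecker

noncomputable section

/-- The Toeplitz-plus-Hankel matrix `tph(a)` of a vector `a ∈ ℂ^n`. -/
def tph {n : ℕ} (a : Fin n → ℂ) : Matrix (Fin n) (Fin n) ℂ :=
  Matrix.of fun i j => thSelect a i j

/-- The fourth-order block Toeplitz-plus-Hankel matrix of `x = (x_{k,l}) ∈ ℂ^{n×m}`:
blocks over the second index `l`, with block `B_l = tph(x_{·,l})`. -/
def btph4 {n m : ℕ} (x : Fin n → Fin m → ℂ) :
    Matrix (Fin m × Fin n) (Fin m × Fin n) ℂ :=
  Matrix.of fun p q => thSelect (fun l => tph fun k => x k l) p.1 q.1 p.2 q.2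

/-- The selector matrix of the `s`-th coefficient. -/
def selMat (n : ℕ) (s : Fin n) : Matrix (Fin n) (Fin n) ℝ :=
  Matrix.of fun i j => thSelect (fun t => if t = s then (1 : ℝ) else 0) i j

theorem thSelect_eq_sum {n : ℕ} (a : Fin n → ℂ) (i j : Fin n) :
    thSelect a i j = ∑ s, ((selMat n s i j : ℝ) : ℂ) * a s := by
  simp only [selMat, thSelect, Matrix.of_apply]
  split_ifs <;> simp [add_mul, Finset.sum_add_distrib, apply_ite Complex.ofReal]

theorem thSelect_apply {m n : ℕ} (B : Fin m → Matrix (Fin n) (Fin n) ℂ) (i j : Fin m)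
    (p q : Fin n) : thSelect B i j p q = thSelect (fun l => B l p q) i j := by
  simp only [thSelect]
  split_ifs <;> simp

theorem btph4_eq {n m : ℕ} (x : Fin n → Fin m → ℂ) :
    btph4 x = ∑ k : Fin n, ∑ l : Fin m, x k l •
      ((selMat m l).map Complex.ofReal ⊗ₖ (selMat n k).map Complex.ofReal) := by
  ext ⟨p1, p2⟩ ⟨q1, q2⟩
  simp only [btph4, Matrix.of_apply, thSelect_apply, tph, Matrix.sum_apply, Matrix.smul_apply,
    Matrix.kroneckerMap_apply, Matrix.map_apply, thSelect_eq_sum, Finset.mul_sum, smul_eq_mul]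
  rw [Finset.sum_comm]
  refine Finset.sum_congr rfl fun k _ => Finset.sum_congr rfl fun l _ => ?_
  ring

theorem cos_sum_zero (n p : ℕ) (hp : 0 < p) (hpn : p < 2 * n) :
    ∑ j : Fin n, Real.cos ((2 * (j : ℕ) + 1) * (p * Real.pi / (2 * n))) = 0 := by
  have hn : (0 : ℝ) < n := by
    have : 0 < n := by omega
    exact_mod_cast this
  have hp' : (0 : ℝ) < p := by exact_mod_cast hp
  have hpn' : (p : ℝ) < 2 * n := by exact_mod_cast hpn
  set α : ℝ := p * Real.pi / (2 * n) with hα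
  have hs : 0 < Real.sin α := by
    apply Real.sin_pos_of_pos_of_lt_pi
    · have := Real.pi_pos
      positivity
    · rw [hα, div_lt_iff₀ (by positivity)]
      nlinarith [Real.pi_pos]
  have key : ∀ N : ℕ, 2 * Real.sin α * ∑ j ∈ Finset.range N, Real.cos ((2 * (j : ℝ) + 1) * α)
      = Real.sin (2 * N * α) := by
    intro N
    induction N with
    | zero => simp
    | succ N ih =>
      rw [Finset.sum_range_succ, mul_add, ih]
      have e1 : 2 * (N : ℝ) * α = (2 * N + 1) * α - α := by ring
      have e2 : 2 * ((N + 1 : ℕ) : ℝ) * α = (2 * N + 1) * α + α := by push_cast; ring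
      rw [e1, e2, Real.sin_sub, Real.sin_add]
      ring
  have h := key n
  have e : 2 * (n : ℝ) * α = p * Real.pi := by rw [hα]; field_simp
  rw [e, Real.sin_nat_mul_pi] at h
  rw [Fin.sum_univ_eq_sum_range (fun j : ℕ => Real.cos ((2 * (j : ℝ) + 1) * α)) n]
  rcases mul_eq_zero.mp h with h | h
  · linarith
  · exact h

theorem cos_sum_mul (n : ℕ) (k l : Fin n) :
    ∑ j : Fin n, Real.cos ((k : ℕ) * (2 * (j : ℕ) + 1) * Real.pi / (2 * n)) *
      Real.cos ((l : ℕ) * (2 * (j : ℕ) + 1) * Real.pi / (2 * n)) =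
    if k = l then (if (k : ℕ) = 0 then (n : ℝ) else n / 2) else 0 := by
  have red : ∀ a b : ℕ, b ≤ a →
      ∑ j : Fin n, Real.cos ((a : ℕ) * (2 * (j : ℕ) + 1) * Real.pi / (2 * n)) *
      Real.cos ((b : ℕ) * (2 * (j : ℕ) + 1) * Real.pi / (2 * n)) =
      ((∑ j : Fin n, Real.cos ((2 * (j : ℕ) + 1) * ((a + b : ℕ) * Real.pi / (2 * n)))) +
      ∑ j : Fin n, Real.cos ((2 * (j : ℕ) + 1) * ((a - b : ℕ) * Real.pi / (2 * n)))) / 2 := by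
    intro a b hab
    rw [← Finset.sum_add_distrib, Finset.sum_div]
    refine Finset.sum_congr rfl fun j _ => ?_
    push_cast [hab]
    have e1 : (2 * (j : ℕ) + 1) * (((a : ℝ) + b) * Real.pi / (2 * n)) =
      (a * (2 * (j : ℕ) + 1) * Real.pi / (2 * n)) + (b * (2 * (j : ℕ) + 1) * Real.pi / (2 * n)) := by
      ring
    have e2 : (2 * (j : ℕ) + 1) * (((a : ℝ) - b) * Real.pi / (2 * n)) =
      (a * (2 * (j : ℕ) + 1) * Real.pi / (2 * n)) - (b * (2 * (j : ℕ) + 1) * Real.pi / (2 * n)) := by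
      ring
    rw [e1, e2, Real.cos_add, Real.cos_sub]
    ring
  have hk := k.isLt
  have hl := l.isLt
  rcases lt_trichotomy (k : ℕ) (l : ℕ) with h | h | h
  · have hne : k ≠ l := fun e => by rw [e] at h; exact lt_irrefl _ h
    simp_rw [mul_comm (Real.cos ((k : ℕ) * _ * _ / _))]
    rw [red _ _ h.le, cos_sum_zero n _ (by omega) (by omega),
      cos_sum_zero n _ (by omega) (by omega), if_neg hne]
    simp
  · have he : k = l := Fin.ext h
    subst he
    rw [red _ _ le_rfl, if_pos rfl]
    split_ifs with h0
    · simp [h0]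
    · rw [cos_sum_zero n _ (by omega) (by omega)]
      simp
  · have hne : k ≠ l := fun e => by rw [e] at h; exact lt_irrefl _ h
    rw [red _ _ h.le, cos_sum_zero n _ (by omega) (by omega),
      cos_sum_zero n _ (by omega) (by omega), if_neg hne]
    simp

theorem dct_orth_s3 (n : ℕ) : dctMatrix n * (dctMatrix n)ᵀ = 1 := by
  ext k l
  have hn : (0 : ℝ) < n := by exact_mod_cast k.pos
  rw [Matrix.mul_apply]
  simp only [dctMatrix, Matrix.transpose_apply, Matrix.of_apply]
  rw [Finset.sum_congr rfl fun j _ => mul_mul_mul_comm _ _ _ _]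
  rw [← Finset.mul_sum, cos_sum_mul, Matrix.one_apply]
  by_cases h : k = l
  · subst h
    simp only [if_true]
    rw [Real.mul_self_sqrt (by apply div_nonneg _ hn.le; split_ifs <;> norm_num)]
    split_ifs <;> field_simp <;> norm_num
  · simp [h]

/-- The eigenvalues. -/
def lam (n : ℕ) (k s : Fin n) : ℝ :=
  if (s : ℕ) = 0 then 1 else 2 * Real.cos (2 * (s : ℕ) * ((k : ℕ) * Real.pi / (2 * n)))

theorem cos_refl (n k : ℕ) (hn : 0 < n) (t : ℝ) :
    Real.cos (k * (4 * n - t) * Real.pi / (2 * n)) = Real.cos (k * t * Real.pi / (2 * n)) := by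
  have hn' : (n : ℝ) ≠ 0 := by exact_mod_cast hn.ne'
  have : k * (4 * n - t) * Real.pi / (2 * n) =
      k * (2 * Real.pi) - k * t * Real.pi / (2 * n) := by
    field_simp
    ring
  rw [this, Real.cos_nat_mul_two_pi_sub]

theorem sel_eig (n : ℕ) (s i k : Fin n) :
    ∑ j, selMat n s i j * Real.cos ((k : ℕ) * (2 * (j : ℕ) + 1) * Real.pi / (2 * n)) =
      lam n k s * Real.cos ((k : ℕ) * (2 * (i : ℕ) + 1) * Real.pi / (2 * n)) := by
  have hi := i.isLt
  have hs := s.isLt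
  by_cases h0 : (s : ℕ) = 0
  · have : ∀ j, selMat n s i j = if j = i then 1 else 0 := by
      intro j
      have hj := j.isLt
      simp only [selMat, thSelect, Matrix.of_apply, Fin.ext_iff]
      split_ifs <;> first | omega | simp
    simp [this, lam, h0]
  · let j1 : Fin n := ⟨if (i : ℕ) + s < n then i + s else 2 * n - 1 - i - s, by
      split_ifs <;> omega⟩
    let j2 : Fin n := ⟨if (s : ℕ) ≤ i then i - s else s - 1 - i, by split_ifs <;> omega⟩
    have : ∀ j, selMat n s i j = (if j = j1 then 1 else 0) + (if j = j2 then 1 else 0) := by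
      intro j
      have hj := j.isLt
      simp only [selMat, thSelect, Matrix.of_apply, Fin.ext_iff, j1, j2]
      split_ifs <;> first | omega | simp
    simp only [this, add_mul, Finset.sum_add_distrib, ite_mul, one_mul, zero_mul,
      Finset.sum_ite_eq', Finset.sum_ite_eq, Finset.mem_univ, if_true]
    have c1 : Real.cos ((k : ℕ) * (2 * (j1 : ℕ) + 1) * Real.pi / (2 * n)) =
        Real.cos ((k : ℕ) * (2 * (i : ℕ) + 2 * (s : ℕ) + 1) * Real.pi / (2 * n)) := by
      simp only [j1]
      split_ifs with h
      · push_cast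
        congr 1
        ring
      · rw [← cos_refl n k i.pos (2 * (i : ℕ) + 2 * (s : ℕ) + 1)]
        have e : ((2 * n - 1 - i - s : ℕ) : ℝ) = 2 * n - 1 - (i : ℕ) - (s : ℕ) := by
          have : (2 * n - 1 - i - s : ℕ) + 1 + i + s = 2 * n := by omega
          have := congrArg (Nat.cast (R := ℝ)) this
          push_cast at this
          linarith
        rw [e]
        congr 1
        ring
    have c2 : Real.cos ((k : ℕ) * (2 * (j2 : ℕ) + 1) * Real.pi / (2 * n)) =
        Real.cos ((k : ℕ) * (2 * (i : ℕ) - 2 * (s : ℕ) + 1) * Real.pi / (2 * n)) := by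
      simp only [j2]
      split_ifs with h
      · push_cast [h]
        congr 1
        ring
      · have e : ((s - 1 - i : ℕ) : ℝ) = (s : ℕ) - 1 - (i : ℕ) := by
          have : (s - 1 - i : ℕ) + 1 + i = (s : ℕ) := by omega
          have := congrArg (Nat.cast (R := ℝ)) this
          push_cast at this
          linarith
        rw [e, ← Real.cos_neg]
        congr 1
        ring
    rw [c1, c2, lam, if_neg h0]
    have e1 : (k : ℕ) * (2 * (i : ℕ) + 2 * (s : ℕ) + 1) * Real.pi / (2 * n) =
      (k : ℕ) * (2 * (i : ℕ) + 1) * Real.pi / (2 * n) +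
        2 * (s : ℕ) * ((k : ℕ) * Real.pi / (2 * n)) := by ring
    have e2 : (k : ℕ) * (2 * (i : ℕ) - 2 * (s : ℕ) + 1) * Real.pi / (2 * n) =
      (k : ℕ) * (2 * (i : ℕ) + 1) * Real.pi / (2 * n) -
        2 * (s : ℕ) * ((k : ℕ) * Real.pi / (2 * n)) := by ring
    rw [e1, e2, Real.cos_add, Real.cos_sub]
    ring

theorem dct_zero_pos (n : ℕ) (k : Fin n) : 0 < dctMatrix n k ⟨0, k.pos⟩ := by
  have hn : (0 : ℝ) < n := by exact_mod_cast k.pos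
  have hk : ((k : ℕ) : ℝ) < n := by exact_mod_cast k.isLt
  simp only [dctMatrix, Matrix.of_apply]
  apply mul_pos
  · apply Real.sqrt_pos.mpr
    apply div_pos _ hn
    split_ifs <;> norm_num
  · have := Real.pi_pos
    apply Real.cos_pos_of_mem_Ioo
    constructor
    · have : 0 ≤ (k : ℕ) * (2 * ((0 : ℕ) : ℝ) + 1) * Real.pi / (2 * n) := by positivity
      linarith
    · rw [div_lt_div_iff₀ (by positivity) (by norm_num)]
      push_cast
      nlinarith

theorem Mmat_eq (n : ℕ) (k s : Fin n) : Mmat n k s = lam n k s := by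
  have hinv : (Wmat n)⁻¹ = Matrix.diagonal fun i => (dctMatrix n i ⟨0, i.pos⟩)⁻¹ := by
    apply Matrix.inv_eq_left_inv
    rw [Wmat, Matrix.diagonal_mul_diagonal, ← Matrix.diagonal_one]
    congr 1
    ext i
    exact inv_mul_cancel₀ (dct_zero_pos n i).ne'
  have hp := dct_zero_pos n k
  rw [Mmat, hinv, Matrix.mul_assoc, Matrix.diagonal_mul, inv_mul_eq_iff_eq_mul₀ hp.ne',
    Matrix.mul_add, Matrix.mul_one, Matrix.add_apply, Matrix.mul_apply]
  by_cases h0 : (s : ℕ) = 0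
  · have hs : s = ⟨0, k.pos⟩ := Fin.ext h0
    simp [Zmat, lam, hs]
  · let s' : Fin n := ⟨s - 1, by omega⟩
    have hz : ∀ j, Zmat n j s = if j = s' then 1 else 0 := by
      intro j
      simp only [Zmat, Matrix.of_apply, s', Fin.ext_iff]
      split_ifs <;> first | omega | rfl
    have e : ((s' : ℕ) : ℝ) = (s : ℕ) - 1 := by
      simp only [s']
      push_cast [Nat.one_le_iff_ne_zero.mpr h0]
      ring
    simp only [hz, mul_ite, mul_one, mul_zero, Finset.sum_ite_eq', Finset.sum_ite_eq,
      Finset.mem_univ, if_true, lam, if_neg h0, dctMatrix, Matrix.of_apply, e]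
    have e1 : (k : ℕ) * (2 * (s : ℕ) + 1) * Real.pi / (2 * n) =
        2 * (s : ℕ) * ((k : ℕ) * Real.pi / (2 * n)) + (k : ℕ) * Real.pi / (2 * n) := by ring
    have e2 : (k : ℕ) * (2 * ((s : ℕ) - 1 : ℝ) + 1) * Real.pi / (2 * n) =
        2 * (s : ℕ) * ((k : ℕ) * Real.pi / (2 * n)) - (k : ℕ) * Real.pi / (2 * n) := by ring
    have e3 : (k : ℕ) * (2 * ((0 : ℕ) : ℝ) + 1) * Real.pi / (2 * n) =
        (k : ℕ) * Real.pi / (2 * n) := by push_cast; ring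
    rw [e1, e2, e3, Real.cos_add, Real.cos_sub]
    ring

theorem sel_diag (n : ℕ) (s : Fin n) :
    dctMatrix n * selMat n s * (dctMatrix n)ᵀ = Matrix.diagonal fun k => Mmat n k s := by
  have h : selMat n s * (dctMatrix n)ᵀ =
      (dctMatrix n)ᵀ * Matrix.diagonal fun k => Mmat n k s := by
    ext i k
    rw [Matrix.mul_diagonal, Matrix.mul_apply, Mmat_eq]
    simp only [dctMatrix, Matrix.transpose_apply, Matrix.of_apply]
    simp_rw [mul_left_comm (selMat n s i _)]
    rw [← Finset.mul_sum, sel_eig]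
    ring
  rw [Matrix.mul_assoc, h, ← Matrix.mul_assoc, dct_orth_s3, Matrix.one_mul]

theorem sel_diag_complex (n : ℕ) (s : Fin n) :
    (dctMatrix n).map Complex.ofReal * (selMat n s).map Complex.ofReal *
      ((dctMatrix n).map Complex.ofReal)ᵀ =
      Matrix.diagonal fun k => ((Mmat n k s : ℝ) : ℂ) := by
  have h := congrArg (fun A : Matrix (Fin n) (Fin n) ℝ => A.map Complex.ofRealHom) (sel_diag n s)
  simp only [Matrix.map_mul] at h
  rw [Matrix.diagonal_map (map_zero _)] at h
  exact h

/-- For all `n, m ≥ 1` and `x = (x_{k,l}) ∈ ℂ^{n×m}`: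
`(C_m ⊗ C_n) · btph(x) · (C_mᵀ ⊗ C_nᵀ) = diag(x̂)`, where
`x̂_{k,l} = ∑_{k',l'} (M_n)_{k,k'} (M_m)_{l,l'} x_{k',l'}`. -/
theorem dct_diagonalizes_btph4 (n m : ℕ) (hn : 1 ≤ n) (hm : 1 ≤ m)
    (x : Fin n → Fin m → ℂ) :
    ((dctMatrix m).map (Complex.ofReal) ⊗ₖ (dctMatrix n).map (Complex.ofReal)) * btph4 x *
        (((dctMatrix m).map (Complex.ofReal))ᵀ ⊗ₖ ((dctMatrix n).map (Complex.ofReal))ᵀ)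
      = Matrix.diagonal (fun p : Fin m × Fin n =>
          ∑ k' : Fin n, ∑ l' : Fin m,
            ((Mmat n p.2 k' * Mmat m p.1 l' : ℝ) : ℂ) * x k' l') := by
  rw [btph4_eq]
  simp only [Matrix.mul_sum, Matrix.sum_mul, Matrix.mul_smul, Matrix.smul_mul,
    ← Matrix.mul_kronecker_mul, sel_diag_complex, Matrix.diagonal_kronecker_diagonal]
  ext p q
  simp only [Matrix.sum_apply, Matrix.smul_apply, Matrix.diagonal_apply, smul_eq_mul]
  by_cases h : p = q
  · simp only [if_pos h]
    refine Finset.sum_congr rfl fun k _ => Finset.sum_congr rfl fun l _ => ?_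
    push_cast
    ring
  · simp [h]
end
end

section
/- For every n ≥ 1, every family A = (A^1, …, A^n) of complex I₁×l matrices and every family B = (B^1, …, B^n) of complex l×I₂ matrices, btph(A) · btph(B) = btph(C), where C = (C^1, …, C^n) is the unique family of complex I₁×I₂ matrices satisfying Ĉ^p = Â^p · B̂^p for all 1 ≤ p ≤ n, with X̂^p = ∑_{q=1}^n (M_n)_{p,q} X^q denoting the cosine-transformed slices (uniqueness holds since M_n is invertible). -/
open Matrix

noncomputable section

/-- The cosine-transformed slices `X̂^p = ∑_q (M_n)_{p,q} X^q` of a family of matrices. -/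
def cosHat {n I₁ I₂ : ℕ} (X : Fin n → Matrix (Fin I₁) (Fin I₂) ℂ) :
    Fin n → Matrix (Fin I₁) (Fin I₂) ℂ :=
  fun p => ∑ q, ((Mmat n p q : ℝ) : ℂ) • X q

/-- The cosine vector. -/
def cw (n p : ℕ) (j : ℤ) : ℝ := Real.cos ((p : ℝ) * (2 * (j : ℝ) + 1) * Real.pi / (2 * n))

lemma cw_neg (n p : ℕ) (j k : ℤ) (h : j + k = -1) : cw n p j = cw n p k := by
  have hj : j = -1 - k := by omega
  subst hj
  unfold cw
  rw [← Real.cos_neg]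
  congr 1
  push_cast
  ring

lemma cw_refl (n p : ℕ) (hn : 1 ≤ n) (j k : ℤ) (h : j + k = 2 * n - 1) :
    cw n p j = cw n p k := by
  have hj : j = 2 * n - 1 - k := by omega
  subst hj
  unfold cw
  rw [← Real.cos_neg, ← Real.cos_add_nat_mul_two_pi _ p]
  congr 1
  have : (n : ℝ) ≠ 0 := by positivity
  push_cast
  field_simp
  ring

lemma cw_add (n p : ℕ) (hn : 1 ≤ n) (i q : ℤ) :
    cw n p (i + q) + cw n p (i - q) = 2 * Real.cos (p * q * Real.pi / n) * cw n p i := by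
  unfold cw
  have : (n : ℝ) ≠ 0 := by positivity
  have e1 : (p : ℝ) * (2 * ((i + q : ℤ) : ℝ) + 1) * Real.pi / (2 * n) =
      (p : ℝ) * (2 * (i : ℝ) + 1) * Real.pi / (2 * n) + p * q * Real.pi / n := by
    push_cast; field_simp; ring
  have e2 : (p : ℝ) * (2 * ((i - q : ℤ) : ℝ) + 1) * Real.pi / (2 * n) =
      (p : ℝ) * (2 * (i : ℝ) + 1) * Real.pi / (2 * n) - p * q * Real.pi / n := by
    push_cast; field_simp; ring
  rw [e1, e2, Real.cos_add, Real.cos_sub]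
  ring

lemma cw_zero_ne (n p : ℕ) (hp : p < n) : cw n p 0 ≠ 0 := by
  apply ne_of_gt
  unfold cw
  have hp' : (p : ℝ) < n := by exact_mod_cast hp
  have hn : (0 : ℝ) < n := by exact_mod_cast (by omega : 0 < n)
  have := Real.pi_pos
  apply Real.cos_pos_of_mem_Ioo
  constructor
  · have : 0 ≤ (p : ℝ) * (2 * ((0 : ℤ) : ℝ) + 1) * Real.pi / (2 * n) := by
      push_cast; positivity
    linarith
  · rw [div_lt_div_iff₀ (by positivity) (by positivity)]
    push_cast
    nlinarith

lemma Mmat_zero (n : ℕ) (p q : Fin n) :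
    Mmat n p q = if (q : ℕ) = 0 then 1 else 2 * Real.cos (p * q * Real.pi / n) := by
  have hn : 1 ≤ n := by have := p.isLt; omega
  have hn0 : (0 : ℝ) < n := by exact_mod_cast hn
  have hs : Real.sqrt ((2 - if (p : ℕ) = 0 then (1 : ℝ) else 0) / n) ≠ 0 := by
    apply ne_of_gt
    apply Real.sqrt_pos.mpr
    split_ifs
    · norm_num; exact hn
    · norm_num; exact hn
  have hd : ∀ (p j : Fin n), dctMatrix n p j =
      Real.sqrt ((2 - if (p : ℕ) = 0 then (1 : ℝ) else 0) / n) * cw n p (j : ℕ) := by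
    intro p j
    simp [dctMatrix, cw]
  have h0 : ∀ p : Fin n, dctMatrix n p ⟨0, p.pos⟩ ≠ 0 := by
    intro p
    rw [hd]
    apply mul_ne_zero
    · apply ne_of_gt
      apply Real.sqrt_pos.mpr
      split_ifs
      · norm_num; exact hn
      · norm_num; exact hn
    · exact cw_zero_ne n p p.isLt
  have hW : (Wmat n)⁻¹ = Matrix.diagonal fun i => (dctMatrix n i ⟨0, i.pos⟩)⁻¹ := by
    apply Matrix.inv_eq_left_inv
    rw [Wmat, Matrix.diagonal_mul_diagonal, ← Matrix.diagonal_one]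
    congr 1
    funext i
    exact inv_mul_cancel₀ (h0 i)
  rw [Mmat, hW, Matrix.mul_assoc, Matrix.diagonal_mul, Matrix.mul_add, Matrix.mul_one,
    Matrix.add_apply, Matrix.mul_apply]
  rw [inv_mul_eq_iff_eq_mul₀ (h0 p)]
  split_ifs with hq
  · have : q = ⟨0, p.pos⟩ := Fin.ext hq
    subst this
    simp [Zmat]
  · have hlt : (q : ℕ) - 1 < n := by omega
    rw [Finset.sum_eq_single ⟨(q : ℕ) - 1, hlt⟩]
    · rw [hd, hd, hd]
      have hz : Zmat n ⟨(q : ℕ) - 1, hlt⟩ q = 1 := by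
        simp only [Zmat, Matrix.of_apply]; rw [if_pos]; omega
      rw [hz]
      have h := cw_add n p hn 0 (q : ℕ)
      have h2 := cw_neg n p (0 - (q : ℕ)) (((q : ℕ) - 1 : ℕ)) (by omega)
      rw [h2, zero_add] at h
      push_cast at h ⊢
      linear_combination Real.sqrt ((2 - if (p : ℕ) = 0 then (1 : ℝ) else 0) / n) * h
    · intro b _ hb
      simp only [Zmat, Matrix.of_apply]
      rw [if_neg, mul_zero]
      intro h
      apply hb
      apply Fin.ext
      simp only; omega
    · simp

/-- Coefficient of `X q` in `thSelect X i j`. -/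
def ee {n : ℕ} (i j q : Fin n) : ℝ :=
  (if (((i : ℕ) : ℤ) - ((j : ℕ) : ℤ)).natAbs = (q : ℕ) then 1 else 0) +
  (if (i : ℕ) + j + 1 = q ∨ (i : ℕ) + j + q + 1 = 2 * n then 1 else 0)

lemma thSelect_eq_s5 {n : ℕ} (X : Fin n → ℂ) (i j : Fin n) :
    thSelect X i j = ∑ q, X q * ((ee i j q : ℝ) : ℂ) := by
  have hi := i.isLt
  have hj := j.isLt
  unfold thSelect ee
  push_cast
  simp only [mul_add, Finset.sum_add_distrib]
  congr 1
  · rw [Finset.sum_eq_single ⟨(((i : ℕ) : ℤ) - ((j : ℕ) : ℤ)).natAbs, by omega⟩]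
    · simp
    · intro b _ hb
      rw [if_neg]
      · simp
      · intro h; exact hb (Fin.ext h.symm)
    · simp
  · split_ifs with h1 h2
    · rw [Finset.sum_eq_single ⟨(i : ℕ) + j + 1, by omega⟩]
      · simp
      · intro b _ hb
        rw [if_neg]
        · simp
        · have hb' : (b : ℕ) ≠ (i : ℕ) + j + 1 := fun h => hb (Fin.ext h)
          omega
      · simp
    · symm
      apply Finset.sum_eq_zero
      intro b _
      rw [if_neg]
      · simp
      · omega
    · rw [Finset.sum_eq_single ⟨2 * n - 1 - ((i : ℕ) + j), by omega⟩]
      · rw [if_pos]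
        · simp
        · right; simp only; omega
      · intro b _ hb
        rw [if_neg]
        · simp
        · have hb' : (b : ℕ) ≠ 2 * n - 1 - ((i : ℕ) + j) := fun h => hb (Fin.ext h)
          omega
      · simp

lemma sum_ee {n : ℕ} (p : ℕ) (i q : Fin n) :
    ∑ j : Fin n, ee i j q * cw n p (j : ℕ) =
      (if (q : ℕ) = 0 then 1 else 2 * Real.cos (p * q * Real.pi / n)) * cw n p (i : ℕ) := by
  have hi := i.isLt
  have hq := q.isLt
  have hn : 1 ≤ n := by omega
  split_ifs with h0
  · rw [Finset.sum_eq_single i]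
    · unfold ee
      rw [if_pos (by omega), if_neg (by omega)]; simp
    · intro b _ hb
      have hb' : (b : ℕ) ≠ i := fun h => hb (Fin.ext h)
      have := b.isLt
      unfold ee
      rw [if_neg (by omega), if_neg (by omega)]; simp
    · simp
  · have key : ∀ j : Fin n, ee i j q =
        (if (j : ℕ) = i + q ∨ (j : ℕ) + i + q + 1 = 2 * n then 1 else 0) +
        (if (j : ℕ) + q = i ∨ (j : ℕ) + i + 1 = q then 1 else 0) := by
      intro j
      have := j.isLt
      unfold ee
      split_ifs <;> first | omega | norm_num
    simp only [key, add_mul, Finset.sum_add_distrib]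
    have hadd := cw_add n p hn (i : ℕ) (q : ℕ)
    push_cast at hadd
    rw [← hadd]
    congr 1
    · have : ∃ k : Fin n, (k : ℕ) = i + q ∨ (k : ℕ) + i + q + 1 = 2 * n := by
        by_cases h : (i : ℕ) + q < n
        · exact ⟨⟨_, h⟩, Or.inl rfl⟩
        · exact ⟨⟨2 * n - 1 - i - q, by omega⟩, Or.inr (by simp only; omega)⟩
      obtain ⟨k, hk⟩ := this
      have hkl := k.isLt
      rw [Finset.sum_eq_single k]
      · rw [if_pos hk, one_mul]
        rcases hk with hk | hk
        · rw [hk]; push_cast; rfl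
        · exact cw_refl n p hn _ _ (by omega)
      · intro b _ hb
        have hb' : (b : ℕ) ≠ k := fun h => hb (Fin.ext h)
        have := b.isLt
        rw [if_neg (by omega)]; simp
      · simp
    · have : ∃ k : Fin n, (k : ℕ) + q = i ∨ (k : ℕ) + i + 1 = q := by
        by_cases h : (q : ℕ) ≤ i
        · exact ⟨⟨i - q, by omega⟩, Or.inl (by simp only; omega)⟩
        · exact ⟨⟨q - 1 - i, by omega⟩, Or.inr (by simp only; omega)⟩
      obtain ⟨k, hk⟩ := this
      have hkl := k.isLt
      rw [Finset.sum_eq_single k]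
      · rw [if_pos hk, one_mul]
        rcases hk with hk | hk
        · congr 1; omega
        · exact cw_neg n p _ _ (by omega)
      · intro b _ hb
        have hb' : (b : ℕ) ≠ k := fun h => hb (Fin.ext h)
        have := b.isLt
        rw [if_neg (by omega)]; simp
      · simp

lemma btph_eig {n I₁ I₂ : ℕ} (X : Fin n → Matrix (Fin I₁) (Fin I₂) ℂ) (p i : Fin n)
    (a : Fin I₁) (b : Fin I₂) :
    ∑ j : Fin n, btph X (i, a) (j, b) * ((cw n p (j : ℕ) : ℝ) : ℂ) =
      cosHat X p a b * ((cw n p (i : ℕ) : ℝ) : ℂ) := by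
  have h1 : ∀ j, btph X (i, a) (j, b) = thSelect (fun q => X q a b) i j := by
    intro j
    simp only [btph, Matrix.of_apply, thSelect, Matrix.add_apply]
    split_ifs <;> simp
  simp only [h1, thSelect_eq_s5, Finset.sum_mul]
  rw [Finset.sum_comm]
  simp only [cosHat, Matrix.sum_apply, Matrix.smul_apply, smul_eq_mul, Finset.sum_mul]
  apply Finset.sum_congr rfl
  intro q _
  have h := congrArg (fun x : ℝ => (x : ℂ)) (sum_ee (p : ℕ) i q)
  rw [← Mmat_zero] at h
  simp only [Complex.ofReal_sum, Complex.ofReal_mul] at h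
  simp only [mul_assoc]
  rw [← Finset.mul_sum, h]
  ring

lemma cw_inj (n : ℕ) (f : Fin n → ℂ)
    (hf : ∀ p : Fin n, ∑ j : Fin n, f j * ((cw n p (j : ℕ) : ℝ) : ℂ) = 0) : f = 0 := by
  have hrec0 : ∀ j : ℤ, cw n 1 j * cw n 0 j = cw n 1 j := by
    intro j; simp [cw]
  have hrec : ∀ (p : ℕ) (j : ℤ), 2 * (cw n 1 j * cw n (p + 1) j) = cw n (p + 2) j + cw n p j := by
    intro p j
    unfold cw
    have e1 : ((p + 2 : ℕ) : ℝ) * (2 * (j : ℝ) + 1) * Real.pi / (2 * n) =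
        ((p + 1 : ℕ) : ℝ) * (2 * (j : ℝ) + 1) * Real.pi / (2 * n) +
        ((1 : ℕ) : ℝ) * (2 * (j : ℝ) + 1) * Real.pi / (2 * n) := by
      push_cast; ring
    have e2 : (p : ℝ) * (2 * (j : ℝ) + 1) * Real.pi / (2 * n) =
        ((p + 1 : ℕ) : ℝ) * (2 * (j : ℝ) + 1) * Real.pi / (2 * n) -
        ((1 : ℕ) : ℝ) * (2 * (j : ℝ) + 1) * Real.pi / (2 * n) := by
      push_cast; ring
    rw [e1, e2, Real.cos_add, Real.cos_sub]
    ring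
  have key : ∀ k p : ℕ, k + p < n →
      ∑ j : Fin n, f j * ((cw n 1 (j : ℕ) : ℝ) : ℂ) ^ k * ((cw n p (j : ℕ) : ℝ) : ℂ) = 0 := by
    intro k
    induction k with
    | zero =>
      intro p hp
      simpa using hf ⟨p, by omega⟩
    | succ k ih =>
      intro p hp
      cases p with
      | zero =>
        rw [← ih 1 (by omega)]
        apply Finset.sum_congr rfl
        intro j _
        have h := congrArg (fun x : ℝ => (x : ℂ)) (hrec0 (j : ℕ))
        simp only [Complex.ofReal_mul] at h
        rw [pow_succ]
        linear_combination f j * ((cw n 1 (j : ℕ) : ℝ) : ℂ) ^ k * h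
      | succ p =>
        have h1 := ih (p + 2) (by omega)
        have h2 := ih p (by omega)
        have h3 : (2 : ℂ) * ∑ j : Fin n, f j * ((cw n 1 (j : ℕ) : ℝ) : ℂ) ^ (k + 1) *
            ((cw n (p + 1) (j : ℕ) : ℝ) : ℂ) = 0 := by
          rw [← add_zero (0 : ℂ)]
          nth_rewrite 2 [← h1]
          rw [← h2, ← Finset.sum_add_distrib, Finset.mul_sum]
          apply Finset.sum_congr rfl
          intro j _
          have h := congrArg (fun x : ℝ => (x : ℂ)) (hrec p (j : ℕ))
          simp only [Complex.ofReal_mul, Complex.ofReal_add, Complex.ofReal_ofNat] at h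
          rw [pow_succ]
          linear_combination f j * ((cw n 1 (j : ℕ) : ℝ) : ℂ) ^ k * h
        simpa using h3
  apply Matrix.eq_zero_of_forall_pow_sum_mul_pow_eq_zero
    (f := fun j : Fin n => ((cw n 1 (j : ℕ) : ℝ) : ℂ))
  · intro j k hjk
    have hjk' : cw n 1 (j : ℕ) = cw n 1 (k : ℕ) := Complex.ofReal_injective hjk
    have hn : (0 : ℝ) < n := by exact_mod_cast j.pos
    have hpi := Real.pi_pos
    have hmem : ∀ j : Fin n, ((1 : ℕ) : ℝ) * (2 * (((j : ℕ) : ℤ) : ℝ) + 1) * Real.pi / (2 * n) ∈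
        Set.Icc 0 Real.pi := by
      intro j
      have hj : ((j : ℕ) : ℝ) + 1 ≤ n := by exact_mod_cast j.isLt
      constructor
      · push_cast; positivity
      · rw [div_le_iff₀ (by positivity)]
        push_cast
        nlinarith
    have h := Real.injOn_cos (hmem j) (hmem k) hjk'
    field_simp at h
    push_cast at h
    apply Fin.ext
    have : ((j : ℕ) : ℝ) = (k : ℕ) := by linarith
    exact_mod_cast this
  · intro k
    have h := key k 0 (by simp)
    simpa [cw] using h

/-- If `C = (C^1, …, C^n)` is the (unique, since `M_n` is invertible) family with
`Ĉ^p = Â^p B̂^p` for all `p`, then `btph(A) · btph(B) = btph(C)`. -/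
theorem btph_mul_btph (n I₁ l I₂ : ℕ) (hn : 1 ≤ n)
    (A : Fin n → Matrix (Fin I₁) (Fin l) ℂ) (B : Fin n → Matrix (Fin l) (Fin I₂) ℂ)
    (C : Fin n → Matrix (Fin I₁) (Fin I₂) ℂ)
    (hC : ∀ p, cosHat C p = cosHat A p * cosHat B p) :
    btph A * btph B = btph C := by
  ext ⟨i, a⟩ ⟨j, b⟩
  have h := cw_inj n (fun j => (btph A * btph B) (i, a) (j, b) - btph C (i, a) (j, b)) (by
    intro p
    simp only [sub_mul, Finset.sum_sub_distrib]
    rw [btph_eig, hC, sub_eq_zero]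
    simp only [Matrix.mul_apply, Finset.sum_mul]
    rw [Finset.sum_comm]
    simp only [mul_assoc]
    simp only [← Finset.mul_sum, Fintype.sum_prod_type, btph_eig]
    rw [Finset.sum_comm]
    apply Finset.sum_congr rfl
    intro c _
    have h2 := btph_eig A p i a c
    rw [mul_comm (cosHat B p c b), ← mul_assoc, ← h2, Finset.sum_mul]
    apply Finset.sum_congr rfl
    intro k _
    ring)
  exact sub_eq_zero.mp (congrFun h j)
end
end
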